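/- arXiv:0704.3658 — 2 statements merged into one kernel-verified Lean document; each statement's English description precedes it below -/
import Mathlib

section
/- Let H be a complex Hilbert space, let (s_n)_{n ≥ 1} be bounded linear operators on H with s_m^* s_n = δ_{mn}·1 for all m, n ≥ 1, let j ≥ 1, and let Ω ∈ H be a unit vector that is cyclic for (s_n) and satisfies s_j Ω = Ω. Let Λ_j be the set of all finite sequences J of positive integers such that either J has length 1, or J has length at least 2 and the last entry of J is different from j. Then the family (s_J Ω)_{J ∈ Λ_j} is an orthonormal family in H whose closed linear span is all of H. -/
/-- For a finite sequence `J = (j₁, …, j_k)`, the product operator `s_{j₁} ⋯ s_{j_k}`. -/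
noncomputable def prodS {H : Type*} [NormedAddCommGroup H] [InnerProductSpace ℂ H]
    (s : ℕ → H →L[ℂ] H) (J : List ℕ) : H →L[ℂ] H :=
  (J.map s).prod

/-!
Since `s_j Ω = Ω`, a word may be padded on the right with the letter `j` without changing the
vector `s_J Ω`. Two words `J` and `K` can therefore be brought to the common length `|J| + |K|`,
and words of equal length satisfy the same relations `s_J^* s_K = δ_{JK}` as the letters do; the
inner product of `s_J Ω` and `s_K Ω` is thus `1` or `0` according to whether the padded words agree.
For `J, K ∈ Λ_j` they agree only if `J = K`. Conversely, deleting trailing letters `j`, but keeping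
the last one if nothing else is left, turns every nonempty word into one in `Λ_j`, and
`Ω = s_j Ω`. So the vectors `s_J Ω` with `J ∈ Λ_j` are all the vectors `s_J Ω`, and their span is
stable under every `s_n` and `s_n^*`.
-/

open scoped InnerProductSpace

section StandardWords

variable {ι : Type*} {S : Set ι} {j a : ι} {J K T : List ι}

/-- The index set `Λ_j` over the alphabet `S`: the words of length `1`, and the longer words that do
not end in `j`. The word `[j]` stands in for the empty word, which is excluded. -/
def standardWords (S : Set ι) (j : ι) : Set (List ι) :=
  {J | (∀ x ∈ J, x ∈ S) ∧ (J.length = 1 ∨ (2 ≤ J.length ∧ J.getLast? ≠ some j))}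

theorem ne_nil_of_mem_standardWords (hJ : J ∈ standardWords S j) : J ≠ [] := by
  rintro rfl
  simp [standardWords] at hJ

theorem append_singleton_mem_standardWords_iff :
    J ++ [a] ∈ standardWords S j ↔ (∀ x ∈ J ++ [a], x ∈ S) ∧ (J = [] ∨ a ≠ j) := by
  obtain rfl | hJ := eq_or_ne J []
  · simp [standardWords]
  · have hlen : 0 < J.length := List.length_pos_iff.2 hJ
    simp [standardWords, hJ, Nat.succ_le_iff, hlen]

theorem eq_nil_of_append_mem_standardWords (hJ : J ≠ []) (hT : ∀ x ∈ T, x = j)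
    (h : J ++ T ∈ standardWords S j) : T = [] := by
  obtain rfl | ⟨T, a, rfl⟩ := T.eq_nil_or_concat'
  · rfl
  · rw [← List.append_assoc, append_singleton_mem_standardWords_iff] at h
    obtain hnil | haj := h.2
    · exact absurd (List.append_eq_nil_iff.1 hnil).1 hJ
    · exact absurd (hT a (by simp)) haj

theorem eq_of_append_replicate_eq_of_mem_standardWords {k l : ℕ} (hJ : J ∈ standardWords S j)
    (hK : K ∈ standardWords S j) (h : J ++ List.replicate k j = K ++ List.replicate l j) :
    J = K := by
  have eq_j_of_mem {m n : ℕ} {T : List ι} (hT : List.replicate m j = T ++ List.replicate n j) :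
      ∀ x ∈ T, x = j :=
    fun x hx ↦ List.eq_of_mem_replicate (hT ▸ List.mem_append_left _ hx)
  obtain ⟨T, rfl, hT⟩ | ⟨T, rfl, hT⟩ := List.append_eq_append_iff.1 h
  · simp [eq_nil_of_append_mem_standardWords (ne_nil_of_mem_standardWords hJ) (eq_j_of_mem hT) hK]
  · simp [eq_nil_of_append_mem_standardWords (ne_nil_of_mem_standardWords hK) (eq_j_of_mem hT) hJ]

end StandardWords

section FixedVector

variable {R M ι : Type*} [Semiring R] [TopologicalSpace M] [AddCommMonoid M] [Module R M]
  {s : ι → M →L[R] M} {j : ι} {Ω : M}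

theorem prod_map_append_replicate_apply (hfix : s j Ω = Ω) (J : List ι) (k : ℕ) :
    ((J ++ List.replicate k j).map s).prod Ω = (J.map s).prod Ω := by
  induction k with
  | zero => simp
  | succ k ih => simpa [List.replicate_succ', ← List.append_assoc, hfix] using ih

theorem image_standardWords {S : Set ι} (hj : j ∈ S) (hfix : s j Ω = Ω) :
    (fun J : List ι ↦ (J.map s).prod Ω) '' standardWords S j =
      (fun J : List ι ↦ (J.map s).prod Ω) '' {J | ∀ x ∈ J, x ∈ S} := by
  refine (Set.image_mono fun J hJ ↦ hJ.1).antisymm ?_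
  rintro _ ⟨J, hJ, rfl⟩
  induction J using List.reverseRecOn with
  | nil => exact ⟨[j], by simpa [standardWords] using hj, by simpa using hfix⟩
  | append_singleton J a ih =>
    obtain rfl | haj := eq_or_ne a j
    · simpa [hfix] using ih fun x hx ↦ hJ x (List.mem_append_left _ hx)
    · exact ⟨J ++ [a], append_singleton_mem_standardWords_iff.2 ⟨hJ, Or.inr haj⟩, rfl⟩

end FixedVector

theorem topologicalClosure_span_mem_invtSubmodule {R M : Type*} [Semiring R] [TopologicalSpace R]
    [TopologicalSpace M] [AddCommMonoid M] [Module R M] [ContinuousSMul R M] [ContinuousAdd M]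
    {A : Set M} {T : M →L[R] M} (h : ∀ v ∈ A, T v ∈ Submodule.span R A) :
    (Submodule.span R A).topologicalClosure ∈ Module.End.invtSubmodule (T : M →ₗ[R] M) :=
  Submodule.topologicalClosure_mem_invtSubmodule <|
    (Module.End.mem_invtSubmodule_iff_map_le _).2 <| (Submodule.map_span_le _ A _).2 h

section CuntzFamily

variable {𝕜 ι H : Type*} [RCLike 𝕜] [DecidableEq ι] [NormedAddCommGroup H] [InnerProductSpace 𝕜 H]
  {s : ι → H →L[𝕜] H} {S : Set ι} {j : ι} {Ω : H}

/-- The relations `s_m^* s_n = δ_{mn}` for `m, n ∈ S`: isometries with pairwise orthogonal ranges.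
They are stated through the inner product, so that `H` need not be complete. -/
def IsCuntzFamily (s : ι → H →L[𝕜] H) (S : Set ι) : Prop :=
  ∀ m n, m ∈ S → n ∈ S → ∀ v w, ⟪s m v, s n w⟫_𝕜 = if m = n then ⟪v, w⟫_𝕜 else 0

namespace IsCuntzFamily

theorem prod_map (hs : IsCuntzFamily s S) (k : ℕ) :
    IsCuntzFamily (fun J : List ι ↦ (J.map s).prod)
      {J | J.length = k ∧ ∀ x ∈ J, x ∈ S} := by
  induction k with
  | zero =>
    rintro J K ⟨hJ, -⟩ ⟨hK, -⟩ v w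
    simp [List.length_eq_zero_iff.1 hJ, List.length_eq_zero_iff.1 hK]
  | succ k ih =>
    rintro (_ | ⟨a, J⟩) (_ | ⟨b, K⟩) ⟨hJ, hJS⟩ ⟨hK, hKS⟩ v w
    · cases hJ
    · cases hJ
    · cases hK
    · rw [List.forall_mem_cons] at hJS hKS
      have hJK := ih J K ⟨Nat.succ.inj hJ, hJS.2⟩ ⟨Nat.succ.inj hK, hKS.2⟩ v w
      simp only [List.map_cons, List.prod_cons, mul_apply_eq_comp, hs a b hJS.1 hKS.1, hJK,
        List.cons.injEq, ite_and]

theorem inner_prod_map_apply_of_fixed (hs : IsCuntzFamily s S) (hj : j ∈ S) (hΩ : ‖Ω‖ = 1)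
    (hfix : s j Ω = Ω) {J K : List ι} (hJ : ∀ x ∈ J, x ∈ S) (hK : ∀ x ∈ K, x ∈ S) :
    ⟪(J.map s).prod Ω, (K.map s).prod Ω⟫_𝕜 =
      if J ++ List.replicate K.length j = K ++ List.replicate J.length j then 1 else 0 := by
  have mem_pad {L : List ι} (hL : ∀ x ∈ L, x ∈ S) (k : ℕ) :
      ∀ x ∈ L ++ List.replicate k j, x ∈ S :=
    List.forall_mem_append.2 ⟨hL, fun _ hx ↦ List.eq_of_mem_replicate hx ▸ hj⟩
  have hpad := hs.prod_map (J.length + K.length) _ _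
    ⟨by simp, mem_pad hJ K.length⟩ ⟨by simp [add_comm], mem_pad hK J.length⟩ Ω Ω
  simpa only [prod_map_append_replicate_apply hfix, inner_self_eq_norm_sq_to_K, hΩ,
    RCLike.ofReal_one, one_pow] using hpad

theorem orthonormal_standardWords (hs : IsCuntzFamily s S) (hj : j ∈ S) (hΩ : ‖Ω‖ = 1)
    (hfix : s j Ω = Ω) :
    Orthonormal 𝕜 (fun J : standardWords S j ↦ (J.1.map s).prod Ω) := by
  rw [orthonormal_iff_ite]
  intro J K
  rw [hs.inner_prod_map_apply_of_fixed hj hΩ hfix J.2.1 K.2.1]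
  refine if_congr ⟨fun h ↦ ?_, fun h ↦ h ▸ rfl⟩ rfl rfl
  exact Subtype.ext (eq_of_append_replicate_eq_of_mem_standardWords J.2 K.2 h)

variable [CompleteSpace H]

theorem iff_adjoint_comp :
    IsCuntzFamily s S ↔ ∀ m n, m ∈ S → n ∈ S →
      (ContinuousLinearMap.adjoint (s m)).comp (s n) =
        if m = n then (1 : H →L[𝕜] H) else 0 := by
  refine forall₄_congr fun m n _ _ ↦ ?_
  rw [forall_comm, ContinuousLinearMap.ext_iff]
  refine forall_congr' fun w ↦ ?_
  split_ifs <;>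
    simp [ext_iff_inner_left 𝕜 (E := H), ContinuousLinearMap.adjoint_inner_right]

theorem adjoint_apply_apply (hs : IsCuntzFamily s S) {m n : ι} (hm : m ∈ S) (hn : n ∈ S) (v : H) :
    ContinuousLinearMap.adjoint (s m) (s n v) = if m = n then v else 0 := by
  have h := DFunLike.congr_fun (iff_adjoint_comp.1 hs m n hm hn) v
  split_ifs at h ⊢ <;> simpa using h

end IsCuntzFamily

variable [CompleteSpace H]

/-- `Ω` is cyclic for `(s_n)_{n ∈ S}`: the only closed subspace that contains `Ω` and is invariant
under all `s_n` and `s_n^*` is `H`. -/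
def IsCyclicVector (s : ι → H →L[𝕜] H) (S : Set ι) (Ω : H) : Prop :=
  ∀ K : Submodule 𝕜 H, IsClosed (K : Set H) → Ω ∈ K →
    (∀ n, n ∈ S → ∀ v ∈ K, s n v ∈ K) →
    (∀ n, n ∈ S → ∀ v ∈ K, ContinuousLinearMap.adjoint (s n) v ∈ K) → K = ⊤

theorem IsCuntzFamily.dense_span_standardWords (hs : IsCuntzFamily s S) (hj : j ∈ S)
    (hcyc : IsCyclicVector s S Ω) (hfix : s j Ω = Ω) :
    Dense (Submodule.span 𝕜
      (Set.range fun J : standardWords S j ↦ (J.1.map s).prod Ω) : Set H) := by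
  rw [← Set.image_eq_range (fun J : List ι ↦ (J.map s).prod Ω)]
  set A := (fun J : List ι ↦ (J.map s).prod Ω) '' standardWords S j
  have mem_A {J : List ι} (hJ : ∀ x ∈ J, x ∈ S) : (J.map s).prod Ω ∈ A :=
    (image_standardWords hj hfix).superset ⟨J, hJ, rfl⟩
  have hΩA : Ω ∈ A := by simpa using mem_A (List.forall_mem_nil _)
  have map_A : ∀ n ∈ S, ∀ v ∈ A, s n v ∈ Submodule.span 𝕜 A := by
    rintro n hn _ ⟨J, hJ, rfl⟩
    simpa using Submodule.subset_span (R := 𝕜) (mem_A (List.forall_mem_cons.2 ⟨hn, hJ.1⟩))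
  have adjoint_map_A : ∀ n ∈ S,
      ∀ v ∈ A, ContinuousLinearMap.adjoint (s n) v ∈ Submodule.span 𝕜 A := by
    rintro n hn _ ⟨J, hJ, rfl⟩
    obtain ⟨a, J, rfl⟩ := List.exists_cons_of_ne_nil (ne_nil_of_mem_standardWords hJ)
    obtain ⟨ha, hJS⟩ := List.forall_mem_cons.1 hJ.1
    simp only [List.map_cons, List.prod_cons, mul_apply_eq_comp,
      hs.adjoint_apply_apply hn ha]
    split_ifs
    · exact Submodule.subset_span (mem_A hJS)
    · exact zero_mem _
  rw [Submodule.dense_iff_topologicalClosure_eq_top]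
  exact hcyc _ (Submodule.isClosed_topologicalClosure _)
    (Submodule.le_topologicalClosure _ (Submodule.subset_span hΩA))
    (fun n hn _ hv ↦ topologicalClosure_span_mem_invtSubmodule (map_A n hn) hv)
    (fun n hn _ hv ↦ topologicalClosure_span_mem_invtSubmodule (adjoint_map_A n hn) hv)

theorem orthonormal_basis_of_P_infty_j_general (hs : IsCuntzFamily s S) (hj : j ∈ S)
    (hΩ : ‖Ω‖ = 1) (hcyc : IsCyclicVector s S Ω) (hfix : s j Ω = Ω) :
    Orthonormal 𝕜 (fun J : standardWords S j ↦ (J.1.map s).prod Ω) ∧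
    Dense (Submodule.span 𝕜
      (Set.range fun J : standardWords S j ↦ (J.1.map s).prod Ω) : Set H) :=
  ⟨hs.orthonormal_standardWords hj hΩ hfix, hs.dense_span_standardWords hj hcyc hfix⟩

end CuntzFamily

theorem orthonormal_basis_of_P_infty_j
    {H : Type*} [NormedAddCommGroup H] [InnerProductSpace ℂ H] [CompleteSpace H]
    (s : ℕ → H →L[ℂ] H)
    (hCuntz : ∀ m n, 1 ≤ m → 1 ≤ n →
      (ContinuousLinearMap.adjoint (s m)).comp (s n) =
        if m = n then (1 : H →L[ℂ] H) else 0)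
    (j : ℕ) (hj : 1 ≤ j)
    (Ω : H) (hΩnorm : ‖Ω‖ = 1)
    (hcyc : ∀ K : Submodule ℂ H, IsClosed (K : Set H) → Ω ∈ K →
      (∀ n, 1 ≤ n → ∀ v ∈ K, s n v ∈ K) →
      (∀ n, 1 ≤ n → ∀ v ∈ K, ContinuousLinearMap.adjoint (s n) v ∈ K) → K = ⊤)
    (hfix : s j Ω = Ω) :
    Orthonormal ℂ
      (fun J : {J : List ℕ // (∀ x ∈ J, 1 ≤ x) ∧
          (J.length = 1 ∨ (2 ≤ J.length ∧ J.getLast? ≠ some j))} =>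
        prodS s J.1 Ω) ∧
    Dense ((Submodule.span ℂ (Set.range
      (fun J : {J : List ℕ // (∀ x ∈ J, 1 ≤ x) ∧
          (J.length = 1 ∨ (2 ≤ J.length ∧ J.getLast? ≠ some j))} =>
        prodS s J.1 Ω)) : Submodule ℂ H) : Set H) :=
  orthonormal_basis_of_P_infty_j_general (S := Set.Ici 1)
    (IsCuntzFamily.iff_adjoint_comp.2 hCuntz) hj hΩnorm hcyc hfix
end

section
/- Let 2 ≤ N < ∞, let H be a complex Hilbert space, and let t_1, …, t_N be bounded operators on H with t_i^* t_j = δ_{ij}·1 for all 1 ≤ i, j ≤ N and ∑_{i=1}^N t_i t_i^* = 1. Let Ω ∈ H be a unit vector that is cyclic for (t_1, …, t_N) and satisfies t_1 Ω = Ω. Define a family (u_p)_{p ≥ 1} of operators on H by u_{(N−1)(k−1)+i} = t_N^{k−1} t_i for every k ≥ 1 and 1 ≤ i ≤ N−1 (every positive integer p is uniquely of this form). Then: (1) u_p^* u_q = δ_{pq}·1 for all p, q ≥ 1, so (u_p) encodes a representation of the Cuntz algebra O∞ on H; (2) u_1 Ω = Ω; and (3) Ω is cyclic for the family (u_p), i.e.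 the smallest closed subspace of H containing Ω and invariant under every u_p and every u_p^* is H itself. (Thus the restriction of the class P_N(1) of O_N along the standard embedding of O∞ into O_N is the class P∞(1), and hence its restriction to the boson algebra is the Fock representation.) -/
/-!
Orthonormality of the `u p` reduces to `t_N` being an isometry whose range is orthogonal to the
ranges of the other `t_i`. For cyclicity, the smallest closed `t`-invariant subspace containing
`Ω = t_1 Ω` is automatically invariant under the `t_i^*`, because `t_i^* t_j` is `0` or `1`; hence
it is everything. If `K` is closed, `u`-invariant and contains `Ω`, then the vectors all of whose
images under powers of `t_N` lie in `K` form a closed `t`-invariant subspace of `K`. It contains `Ω`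
since `t_N^k Ω = t_N^k t_1 Ω`, so `K` is everything too.
-/

theorem exists_eq_mul_add_of_pos {m p : ℕ} (hm : 0 < m) (hp : 1 ≤ p) :
    ∃ a, ∃ i ∈ Set.Icc 1 m, p = m * a + i := by
  have hlt := Nat.mod_lt (p - 1) hm
  have hdiv := Nat.div_add_mod (p - 1) m
  exact ⟨(p - 1) / m, (p - 1) % m + 1, ⟨by omega, by omega⟩, by omega⟩

theorem mul_add_eq_mul_add_iff {m a b i j : ℕ} (hi : i ∈ Set.Icc 1 m) (hj : j ∈ Set.Icc 1 m) :
    m * a + i = m * b + j ↔ a = b ∧ i = j := by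
  refine ⟨fun h => ?_, fun ⟨hab, hij⟩ => by rw [hab, hij]⟩
  obtain ⟨hi₁, him⟩ := hi
  obtain ⟨hj₁, hjm⟩ := hj
  have hm : 0 < m := by omega
  have ha := (Nat.div_mod_unique (a := m * a + i - 1) (c := i - 1) (d := a) hm).2
    ⟨by omega, by omega⟩
  have hb := (Nat.div_mod_unique (a := m * a + i - 1) (c := j - 1) (d := b) hm).2
    ⟨by omega, by omega⟩
  omega

theorem star_pow_mul_mul_pow_mul {A : Type*} [Semiring A] [StarRing A] {V x y : A}
    (hV : star V * V = 1) (hx : star V * x = 0) (hy : star V * y = 0) (a b : ℕ) :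
    star (V ^ a * x) * (V ^ b * y) = if a = b then star x * y else 0 := by
  have hx' : star x * V = 0 := by simpa using congrArg star hx
  induction a generalizing b with
  | zero =>
    cases b with
    | zero => simp
    | succ b => simp [pow_succ', ← mul_assoc, hx']
  | succ a ih =>
    cases b with
    | zero => simp [pow_succ', mul_assoc, hy]
    | succ b =>
      calc star (V ^ (a + 1) * x) * (V ^ (b + 1) * y)
          = star (V ^ a * x) * (star V * V) * (V ^ b * y) := by
            simp only [pow_succ', star_mul, mul_assoc]
        _ = if a + 1 = b + 1 then star x * y else 0 := by
            simp only [hV, mul_one, ih, Nat.add_right_cancel_iff]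

theorem star_mul_eq_ite_of_eq_pow_mul {A : Type*} [Semiring A] [StarRing A] {N : ℕ} {t u : ℕ → A}
    (hN : 2 ≤ N)
    (ht : ∀ i ∈ Set.Icc 1 N, ∀ j ∈ Set.Icc 1 N, star (t i) * t j = if i = j then 1 else 0)
    (hu : ∀ a, ∀ i ∈ Set.Icc 1 (N - 1), u ((N - 1) * a + i) = t N ^ a * t i)
    {p q : ℕ} (hp : 1 ≤ p) (hq : 1 ≤ q) : star (u p) * u q = if p = q then 1 else 0 := by
  have mem_N : N ∈ Set.Icc 1 N := ⟨by omega, le_rfl⟩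
  have mem_of_mem {i : ℕ} (hi : i ∈ Set.Icc 1 (N - 1)) : i ∈ Set.Icc 1 N :=
    Set.Icc_subset_Icc_right (N.sub_le 1) hi
  have isometry_t : star (t N) * t N = 1 := (ht N mem_N N mem_N).trans (if_pos rfl)
  have orthogonal_t {i : ℕ} (hi : i ∈ Set.Icc 1 (N - 1)) : star (t N) * t i = 0 := by
    have hiN := hi.2
    rw [ht N mem_N i (mem_of_mem hi), if_neg (by omega)]
  obtain ⟨a, i, hi, rfl⟩ := exists_eq_mul_add_of_pos (m := N - 1) (by omega) hp
  obtain ⟨b, j, hj, rfl⟩ := exists_eq_mul_add_of_pos (m := N - 1) (by omega) hq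
  simp only [hu a i hi, hu b j hj, mul_add_eq_mul_add_iff hi hj, ite_and,
    star_pow_mul_mul_pow_mul isometry_t (orthogonal_t hi) (orthogonal_t hj),
    ht i (mem_of_mem hi) j (mem_of_mem hj)]

section CyclicSubspace

variable {R E : Type*} [Semiring R] [AddCommMonoid E] [Module R E] [TopologicalSpace E]

/-- The cyclic subspace generated by `Ω`: the smallest closed submodule that contains `Ω` and is
invariant under every operator in `S`. Invariance under adjoints is not part of the definition, so
it makes sense without an inner product. -/
def cyclicSubspace (S : Set (E →L[R] E)) (Ω : E) : Submodule R E :=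
  sInf {K | IsClosed (K : Set E) ∧ Ω ∈ K ∧ ∀ T ∈ S, ∀ v ∈ K, T v ∈ K}

variable {S : Set (E →L[R] E)} {Ω : E}

theorem isClosed_cyclicSubspace : IsClosed (cyclicSubspace S Ω : Set E) := by
  rw [cyclicSubspace, Submodule.coe_sInf]
  exact isClosed_biInter fun K hK => hK.1

theorem mem_cyclicSubspace_self : Ω ∈ cyclicSubspace S Ω :=
  Submodule.mem_sInf.2 fun _ hK => hK.2.1

theorem apply_mem_cyclicSubspace {T : E →L[R] E} (hT : T ∈ S) {v : E}
    (hv : v ∈ cyclicSubspace S Ω) : T v ∈ cyclicSubspace S Ω :=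
  Submodule.mem_sInf.2 fun K hK => hK.2.2 T hT v (Submodule.mem_sInf.1 hv K hK)

theorem cyclicSubspace_le {K : Submodule R E} (hK : IsClosed (K : Set E)) (hΩ : Ω ∈ K)
    (hinv : ∀ T ∈ S, ∀ v ∈ K, T v ∈ K) : cyclicSubspace S Ω ≤ K :=
  sInf_le ⟨hK, hΩ, hinv⟩

theorem cyclicSubspace_le_comap {A T₀ : E →L[R] E} (hT₀ : T₀ ∈ S) (hfix : T₀ Ω = Ω)
    (hA : ∀ T ∈ S, ∀ v ∈ cyclicSubspace S Ω, A (T v) ∈ cyclicSubspace S Ω) :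
    cyclicSubspace S Ω ≤ (cyclicSubspace S Ω).comap (A : E →ₗ[R] E) := by
  suffices h : cyclicSubspace S Ω ≤
      cyclicSubspace S Ω ⊓ (cyclicSubspace S Ω).comap (A : E →ₗ[R] E) from h.trans inf_le_right
  refine cyclicSubspace_le ?_ ⟨mem_cyclicSubspace_self, ?_⟩ ?_
  · exact isClosed_cyclicSubspace.inter (isClosed_cyclicSubspace.preimage A.continuous)
  · have hAΩ := hA T₀ hT₀ Ω mem_cyclicSubspace_self
    rwa [hfix] at hAΩ
  · exact fun T hT v hv => ⟨apply_mem_cyclicSubspace hT hv.1, hA T hT v hv.1⟩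

theorem cyclicSubspace_insert_le {V T₀ : E →L[R] E} (hT₀ : T₀ ∈ S) (hfix : T₀ Ω = Ω)
    {K : Submodule R E} (hK : IsClosed (K : Set E)) (hΩ : Ω ∈ K)
    (hinv : ∀ k : ℕ, ∀ T ∈ S, ∀ v ∈ K, (V ^ k) (T v) ∈ K) :
    cyclicSubspace (insert V S) Ω ≤ K := by
  let L : Submodule R E := ⨅ k : ℕ, K.comap ((V ^ k : E →L[R] E) : E →ₗ[R] E)
  have mem_L {v : E} : v ∈ L ↔ ∀ k : ℕ, (V ^ k) v ∈ K := by
    simp only [L, Submodule.mem_iInf, Submodule.mem_comap, ContinuousLinearMap.coe_coe]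
  have L_le : L ≤ K := fun v hv => mem_L.1 hv 0
  refine (cyclicSubspace_le ?_ (mem_L.2 fun k => ?_) ?_).trans L_le
  · rw [Submodule.coe_iInf]
    exact isClosed_iInter fun k => hK.preimage (V ^ k).continuous
  · have hΩk := hinv k T₀ hT₀ Ω hΩ
    rwa [hfix] at hΩk
  · rintro T (rfl | hT) v hv
    · refine mem_L.2 fun k => ?_
      have hsucc := mem_L.1 hv (k + 1)
      rwa [pow_succ] at hsucc
    · exact mem_L.2 fun k => hinv k T hT v (L_le hv)

theorem cyclicSubspace_image_Icc_le {N : ℕ} (hN : 2 ≤ N) {t u : ℕ → E →L[R] E}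
    (hfix : t 1 Ω = Ω)
    (hu : ∀ a, ∀ i ∈ Set.Icc 1 (N - 1), u ((N - 1) * a + i) = t N ^ a * t i)
    {K : Submodule R E} (hK : IsClosed (K : Set E)) (hΩ : Ω ∈ K)
    (hinv : ∀ p, 1 ≤ p → ∀ v ∈ K, u p v ∈ K) :
    cyclicSubspace (t '' Set.Icc 1 N) Ω ≤ K := by
  have hIcc : Set.Icc 1 N = insert N (Set.Icc 1 (N - 1)) := by
    ext i
    simp only [Set.mem_Icc, Set.mem_insert_iff]
    omega
  have one_mem : 1 ∈ Set.Icc 1 (N - 1) := ⟨le_rfl, by omega⟩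
  rw [hIcc, Set.image_insert_eq]
  refine cyclicSubspace_insert_le (Set.mem_image_of_mem t one_mem) hfix hK hΩ ?_
  rintro k _ ⟨i, hi, rfl⟩ v hv
  have huv := hinv ((N - 1) * k + i) (hi.1.trans (Nat.le_add_left _ _)) v hv
  rwa [hu k i hi] at huv

end CyclicSubspace

section CuntzRelations

variable {𝕜 H : Type*} [RCLike 𝕜] [NormedAddCommGroup H] [InnerProductSpace 𝕜 H] [CompleteSpace H]

theorem adjoint_apply_mem_cyclicSubspace {ι : Type*} [DecidableEq ι] {s : Set ι} {t : ι → H →L[𝕜] H}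
    (hCuntz : ∀ i ∈ s, ∀ j ∈ s,
      (ContinuousLinearMap.adjoint (t i)).comp (t j) = if i = j then (1 : H →L[𝕜] H) else 0)
    {Ω : H} {i₀ : ι} (hi₀ : i₀ ∈ s) (hfix : t i₀ Ω = Ω) {i : ι} (hi : i ∈ s) {v : H}
    (hv : v ∈ cyclicSubspace (t '' s) Ω) :
    ContinuousLinearMap.adjoint (t i) v ∈ cyclicSubspace (t '' s) Ω := by
  refine cyclicSubspace_le_comap (Set.mem_image_of_mem t hi₀) hfix ?_ hv
  rintro _ ⟨j, hj, rfl⟩ w hw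
  rw [← ContinuousLinearMap.comp_apply, hCuntz i hi j hj]
  split_ifs
  · exact hw
  · exact zero_mem _

theorem restriction_of_P_N_1_is_P_infty_1_general (N : ℕ) (hN : 2 ≤ N) (t : ℕ → H →L[𝕜] H)
    (hCuntz : ∀ i j, 1 ≤ i → i ≤ N → 1 ≤ j → j ≤ N →
      (ContinuousLinearMap.adjoint (t i)).comp (t j) = if i = j then (1 : H →L[𝕜] H) else 0)
    (Ω : H)
    (hcyc : ∀ K : Submodule 𝕜 H, IsClosed (K : Set H) → Ω ∈ K →
      (∀ i, 1 ≤ i → i ≤ N → ∀ v ∈ K, t i v ∈ K) →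
      (∀ i, 1 ≤ i → i ≤ N → ∀ v ∈ K, ContinuousLinearMap.adjoint (t i) v ∈ K) → K = ⊤)
    (hfix : t 1 Ω = Ω) (u : ℕ → H →L[𝕜] H)
    (hu : ∀ k i, 1 ≤ k → 1 ≤ i → i ≤ N - 1 →
      u ((N - 1) * (k - 1) + i) = ((t N) ^ (k - 1)).comp (t i)) :
    (∀ p q, 1 ≤ p → 1 ≤ q →
      (ContinuousLinearMap.adjoint (u p)).comp (u q) = if p = q then (1 : H →L[𝕜] H) else 0) ∧
    u 1 Ω = Ω ∧
    (∀ K : Submodule 𝕜 H, IsClosed (K : Set H) → Ω ∈ K →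
      (∀ p, 1 ≤ p → ∀ v ∈ K, u p v ∈ K) → K = ⊤) := by
  have hCuntz' : ∀ i ∈ Set.Icc 1 N, ∀ j ∈ Set.Icc 1 N,
      star (t i) * t j = if i = j then (1 : H →L[𝕜] H) else 0 :=
    fun i hi j hj => hCuntz i j hi.1 hi.2 hj.1 hj.2
  have hu' : ∀ a, ∀ i ∈ Set.Icc 1 (N - 1), u ((N - 1) * a + i) = t N ^ a * t i :=
    fun a i hi => hu (a + 1) i (Nat.le_add_left 1 a) hi.1 hi.2
  refine ⟨fun p q hp hq => star_mul_eq_ite_of_eq_pow_mul hN hCuntz' hu' hp hq, ?_,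
    fun K hK hΩ hinv => ?_⟩
  · simpa [hfix] using congrArg (fun T : H →L[𝕜] H => T Ω) (hu' 0 1 ⟨le_rfl, by omega⟩)
  · have cyclic_t : cyclicSubspace (t '' Set.Icc 1 N) Ω = ⊤ :=
      hcyc _ isClosed_cyclicSubspace mem_cyclicSubspace_self
        (fun i hi hiN _ => apply_mem_cyclicSubspace
          (Set.mem_image_of_mem t (Set.mem_Icc.2 ⟨hi, hiN⟩)))
        (fun i hi hiN _ => adjoint_apply_mem_cyclicSubspace hCuntz'
          (Set.left_mem_Icc.2 (hi.trans hiN)) hfix ⟨hi, hiN⟩)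
    exact top_le_iff.1 (cyclic_t ▸ cyclicSubspace_image_Icc_le hN hfix hu' hK hΩ hinv)

end CuntzRelations

theorem restriction_of_P_N_1_is_P_infty_1
    {H : Type*} [NormedAddCommGroup H] [InnerProductSpace ℂ H] [CompleteSpace H]
    (N : ℕ) (hN : 2 ≤ N)
    (t : ℕ → H →L[ℂ] H)
    (hCuntz : ∀ i j, 1 ≤ i → i ≤ N → 1 ≤ j → j ≤ N →
      (ContinuousLinearMap.adjoint (t i)).comp (t j) =
        if i = j then (1 : H →L[ℂ] H) else 0)
    (hsum : ∑ i ∈ Finset.Icc 1 N, (t i).comp (ContinuousLinearMap.adjoint (t i)) =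
      (1 : H →L[ℂ] H))
    (Ω : H) (hΩnorm : ‖Ω‖ = 1)
    (hcyc : ∀ K : Submodule ℂ H, IsClosed (K : Set H) → Ω ∈ K →
      (∀ i, 1 ≤ i → i ≤ N → ∀ v ∈ K, t i v ∈ K) →
      (∀ i, 1 ≤ i → i ≤ N → ∀ v ∈ K, ContinuousLinearMap.adjoint (t i) v ∈ K) → K = ⊤)
    (hfix : t 1 Ω = Ω)
    (u : ℕ → H →L[ℂ] H)
    (hu : ∀ k i, 1 ≤ k → 1 ≤ i → i ≤ N - 1 →
      u ((N - 1) * (k - 1) + i) = ((t N) ^ (k - 1)).comp (t i)) :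
    (∀ p q, 1 ≤ p → 1 ≤ q →
      (ContinuousLinearMap.adjoint (u p)).comp (u q) =
        if p = q then (1 : H →L[ℂ] H) else 0) ∧
    u 1 Ω = Ω ∧
    (∀ K : Submodule ℂ H, IsClosed (K : Set H) → Ω ∈ K →
      (∀ p, 1 ≤ p → ∀ v ∈ K, u p v ∈ K) →
      (∀ p, 1 ≤ p → ∀ v ∈ K, ContinuousLinearMap.adjoint (u p) v ∈ K) → K = ⊤) := by
  obtain ⟨orthonormal_u, fix_u, cyclic_u⟩ :=
    restriction_of_P_N_1_is_P_infty_1_general N hN t hCuntz Ω hcyc hfix u hu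
  exact ⟨orthonormal_u, fix_u, fun K hK hΩ hinv _ => cyclic_u K hK hΩ hinv⟩
end
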